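/- arXiv:1212.3529 — 2 statements merged into one kernel-verified Lean document; each statement's English description precedes it below -/
import Mathlib

section
/- Let R be a ring, I an ideal of R, and S a left Ore set in R consisting of regular elements of R. If the localization S⁻¹R is a left Artinian ring, or a left Noetherian ring, then S⁻¹I is a (two-sided) ideal of S⁻¹R. -/
open Function

universe u v

/-- A regular element of a ring: a two-sided non-zero-divisor. -/
def IsRegElem {R : Type*} [Ring R] (c : R) : Prop :=
  (∀ x : R, c * x = 0 → x = 0) ∧ (∀ x : R, x * c = 0 → x = 0)

/-- The set `C` of regular elements of a ring. -/
def regSet (R : Type*) [Ring R] : Set R := {c : R | IsRegElem c}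

/-- A (left) ideal is two-sided. -/
def Ideal.IsTwoSidedNC {R : Type*} [Ring R] (I : Ideal R) : Prop :=
  ∀ a ∈ I, ∀ r : R, a * r ∈ I

/-- A prime (two-sided) ideal of a possibly noncommutative ring. -/
def Ideal.IsPrimeNC {R : Type*} [Ring R] (P : Ideal R) : Prop :=
  P ≠ ⊤ ∧ P.IsTwoSidedNC ∧ ∀ a b : R, (∀ r : R, a * r * b ∈ P) → a ∈ P ∨ b ∈ P

/-- The prime radical `n` of a ring: the intersection of all prime ideals. -/
def primeRadical (R : Type*) [Ring R] : Ideal R := sInf {P : Ideal R | P.IsPrimeNC}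

/-- `n` is a nilpotent ideal. -/
def IsNilpotentIdeal {R : Type*} [Ring R] (I : Ideal R) : Prop := ∃ k : ℕ, I ^ (k + 1) = ⊥

/-- `φ : R →+* Q` realizes `Q` as a left quotient ring `C⁻¹R` of `R`:  `R` embeds in `Q`,
every regular element of `R` becomes invertible in `Q`, and every element of `Q` has the
form `(φ c)⁻¹ * (φ r)` with `c` regular. -/
structure IsLeftQuotRing {R : Type u} {Q : Type v} [Ring R] [Ring Q] (φ : R →+* Q) : Prop where
  inj : Function.Injective φ
  isUnit : ∀ c : R, IsRegElem c → IsUnit (φ c)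
  denom : ∀ q : Q, ∃ c r : R, IsRegElem c ∧ φ c * q = φ r

/-- Data of a left quotient ring of `R`. -/
structure LeftQuotData (R : Type u) [Ring R] : Type (u + 1) where
  Q : Type u
  [instQ : Ring Q]
  φ : R →+* Q
  quot : IsLeftQuotRing φ

attribute [instance] LeftQuotData.instQ

/-- `R` has a left Artinian left quotient ring `Q = C⁻¹R`. -/
def HasArtinianLeftQuot (R : Type u) [Ring R] : Prop :=
  ∃ d : LeftQuotData R, IsArtinianRing d.Q

/-- A subset of a ring is a left annihilator. -/
def IsLeftAnnihilatorSet {R : Type*} [Ring R] (A : Set R) : Prop :=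
  ∃ S : Set R, A = {r : R | ∀ s ∈ S, r * s = 0}

/-- The ascending chain condition on left annihilators. -/
def ACCLeftAnnihilators (R : Type*) [Ring R] : Prop :=
  ∀ f : ℕ → Set R, (∀ i, IsLeftAnnihilatorSet (f i)) → (∀ i j, i ≤ j → f i ⊆ f j) →
    ∃ N, ∀ k, N ≤ k → f k = f N

/-- The module `M` contains no infinite direct sum of nonzero submodules. -/
def NoInfiniteIndepFamily (R : Type*) (M : Type*) [Ring R] [AddCommGroup M] [Module R M] : Prop :=
  ¬ ∃ f : ℕ → Submodule R M, (∀ i, f i ≠ ⊥) ∧ iSupIndep f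

/-- A left Goldie ring: ACC on left annihilators and no infinite direct sums of nonzero
left ideals. -/
def IsLeftGoldie (R : Type*) [Ring R] : Prop :=
  ACCLeftAnnihilators R ∧ NoInfiniteIndepFamily R R

/-- The subquotient `n^i/n^{i+1}` of `R` determined by the prime radical `n`. -/
abbrev grPiece (R : Type*) [Ring R] (i : ℕ) :=
  ↥(primeRadical R ^ i) ⧸
    (Submodule.comap (primeRadical R ^ i : Ideal R).subtype (primeRadical R ^ (i + 1)))

/-- The class of `x ∈ n^i` in `n^i/n^{i+1}`. -/
def grMk {R : Type*} [Ring R] (i : ℕ) (x : R) (hx : x ∈ primeRadical R ^ i) : grPiece R i :=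
  Submodule.Quotient.mk ⟨x, hx⟩

/-- The `C̄`-torsion submodule `τ_i` of `n^i/n^{i+1}` (take the span, which coincides with the
set of torsion elements whenever the latter is a submodule, e.g. when `C̄` is a left Ore set);
here `C̄` is represented through `π : R → R̄` as `{c : R | IsRegElem (π c)}`. -/
def tauSub {R : Type u} {Rbar : Type v} [Ring R] [Ring Rbar] (π : R →+* Rbar) (i : ℕ) :
    Submodule R (grPiece R i) :=
  Submodule.span R {u : grPiece R i | ∃ c : R, IsRegElem (π c) ∧ c • u = 0}

/-- The `C̄`-torsionfree module `f_i = (n^i/n^{i+1})/τ_i`. -/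
abbrev fMod {R : Type u} {Rbar : Type v} [Ring R] [Ring Rbar] (π : R →+* Rbar) (i : ℕ) :=
  grPiece R i ⧸ tauSub π i

/-- The class of `x ∈ n^i` in `f_i`. -/
def fMk {R : Type u} {Rbar : Type v} [Ring R] [Ring Rbar] (π : R →+* Rbar) (i : ℕ) (x : R)
    (hx : x ∈ primeRadical R ^ i) : fMod π i :=
  Submodule.Quotient.mk (grMk i x hx)

/-- The subset `C⁻¹K = {(φ c)⁻¹ (φ a) : c ∈ C, a ∈ K}` of a left quotient ring. -/
def locSet {R : Type u} {Q : Type v} [Ring R] [Ring Q] (φ : R →+* Q) (K : Ideal R) : Set Q :=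
  {q : Q | ∃ c a : R, IsRegElem c ∧ a ∈ K ∧ φ c * q = φ a}

/-- A subset of a ring is a left Ore set (multiplicatively closed and satisfying the left
Ore condition). -/
def IsLeftOreSubset {A : Type*} [Ring A] (S : Set A) : Prop :=
  (1 : A) ∈ S ∧ (∀ s ∈ S, ∀ t ∈ S, s * t ∈ S) ∧
    ∀ s ∈ S, ∀ a : A, ∃ t ∈ S, ∃ b : A, t * a = b * s

/-- A left denominator set. -/
def IsLeftDenominatorSet {A : Type*} [Ring A] (S : Set A) : Prop :=
  IsLeftOreSubset S ∧ ∀ a : A, ∀ s ∈ S, a * s = 0 → ∃ t ∈ S, t * a = 0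


/-- A left ideal of a left Noetherian or left Artinian ring that is stable under right
multiplication by a unit is stable under right multiplication by its inverse. -/
theorem Ideal.mul_unit_inv_mem {L : Type*} [Ring L] (h : IsArtinianRing L ∨ IsNoetherianRing L)
    (J : Ideal L) (u : Lˣ) (hu : ∀ x ∈ J, x * (u : L) ∈ J) {y : L} (hy : y ∈ J) :
    y * (↑u⁻¹ : L) ∈ J := by
  rcases h with h | h
  · let f : J →ₗ[L] J := (LinearMap.toSpanSingleton L L (u : L)).restrict hu
    have hf : Injective f := fun a b hab ↦
      Subtype.ext (u.isUnit.mul_left_injective (congrArg Subtype.val hab))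
    obtain ⟨x, hx⟩ := IsArtinian.surjective_of_injective_endomorphism f hf ⟨y, hy⟩
    have hxy : (x : L) * u = y := congrArg Subtype.val hx
    rw [← hxy, Units.mul_inv_cancel_right]
    exact x.2
  · let g : ℕ →o Ideal L :=
      { toFun := fun n ↦ Submodule.comap (LinearMap.toSpanSingleton L L ((u : L) ^ n)) J
        monotone' := monotone_nat_of_le_succ fun n x hx ↦ by
          have hx' : x * (u : L) ^ n ∈ J := hx
          change x * (u : L) ^ (n + 1) ∈ J
          rw [pow_succ, ← mul_assoc]
          exact hu _ hx' }
    obtain ⟨n, hn⟩ := monotone_stabilizes_iff_noetherian.mpr h g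
    have hmem : y * (↑(u⁻¹ ^ (n + 1)) : L) ∈ g (n + 1) := by
      change y * (↑(u⁻¹ ^ (n + 1)) : L) * (u : L) ^ (n + 1) ∈ J
      rwa [mul_assoc, ← Units.val_pow_eq_pow_val, ← Units.val_mul, inv_pow, inv_mul_cancel,
        Units.val_one, mul_one]
    rw [← hn (n + 1) n.le_succ] at hmem
    have hmem' : y * (↑(u⁻¹ ^ (n + 1)) : L) * (u : L) ^ n ∈ J := hmem
    rwa [mul_assoc, ← Units.val_pow_eq_pow_val, ← Units.val_mul, pow_succ', mul_assoc, inv_pow,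
      inv_mul_cancel, mul_one] at hmem'

/-- The left ideal `S⁻¹I` of the left localization `L = S⁻¹R` at a left Ore set `S`. -/
def IsLeftOreSubset.localizedIdeal {R L : Type*} [Ring R] [Ring L] {S : Set R}
    (hS : IsLeftOreSubset S) (ψ : R →+* L) (hdenom : ∀ l : L, ∃ s ∈ S, ∃ a : R, ψ s * l = ψ a)
    (I : Ideal R) : Ideal L where
  carrier := {l : L | ∃ s ∈ S, ∃ a ∈ I, ψ s * l = ψ a}
  zero_mem' := ⟨1, hS.1, 0, I.zero_mem, by simp⟩
  add_mem' := by
    rintro x y ⟨s, hs, a, ha, hx⟩ ⟨s', hs', a', ha', hy⟩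
    obtain ⟨t, ht, b, htb⟩ := hS.2.2 s' hs' s
    refine ⟨t * s, hS.2.1 t ht s hs, t * a + b * a',
      I.add_mem (I.mul_mem_left t ha) (I.mul_mem_left b ha'), ?_⟩
    calc ψ (t * s) * (x + y) = ψ (t * s) * x + ψ (b * s') * y := by rw [mul_add, ← htb]
      _ = ψ (t * a + b * a') := by simp only [map_mul, map_add, mul_assoc, hx, hy]
  smul_mem' := by
    rintro q x ⟨s, hs, a, ha, hx⟩
    obtain ⟨s', hs', r, hq⟩ := hdenom q
    obtain ⟨t, ht, b, htb⟩ := hS.2.2 s hs r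
    refine ⟨t * s', hS.2.1 t ht s' hs', b * a, I.mul_mem_left b ha, ?_⟩
    calc ψ (t * s') * (q * x) = ψ t * (ψ s' * q) * x := by simp only [map_mul, mul_assoc]
      _ = ψ (b * s) * x := by rw [hq, ← map_mul, htb]
      _ = ψ (b * a) := by rw [map_mul, mul_assoc, hx, map_mul]

/-- **Proposition (`a20Jul12`).** Let `R` be a ring, `I` a (two-sided) ideal of `R`, and
`S` a left Ore set in `R` consisting of regular elements; let `ψ : R → L` realize the left
localization `L = S⁻¹R`.  If `L` is a left Artinian ring or a left Noetherian ring, then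
`S⁻¹I = {s⁻¹a : s ∈ S, a ∈ I}` is a (two-sided) ideal of `L`. -/
theorem localization_of_ideal_is_ideal
    {R : Type u} [Ring R] (I : Ideal R) (hI2 : I.IsTwoSidedNC)
    (S : Set R) (hSreg : S ⊆ regSet R) (hOre : IsLeftOreSubset S)
    {L : Type v} [Ring L] (ψ : R →+* L)
    (hinj : Function.Injective ψ)
    (hunit : ∀ s ∈ S, IsUnit (ψ s))
    (hdenom : ∀ l : L, ∃ s ∈ S, ∃ a : R, ψ s * l = ψ a)
    (hLA : IsArtinianRing L ∨ IsNoetherianRing L) :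
    ∃ J : Ideal L, J.IsTwoSidedNC ∧
      (↑J : Set L) = {l : L | ∃ s ∈ S, ∃ a ∈ I, ψ s * l = ψ a} := by
  have hright : ∀ x ∈ hOre.localizedIdeal ψ hdenom I, ∀ r : R,
      x * ψ r ∈ hOre.localizedIdeal ψ hdenom I := by
    rintro x ⟨s, hs, a, ha, hx⟩ r
    exact ⟨s, hs, a * r, hI2 a ha r, by rw [← mul_assoc, hx, map_mul]⟩
  refine ⟨hOre.localizedIdeal ψ hdenom I, fun x hx q ↦ ?_, rfl⟩
  obtain ⟨s, hs, r, hq⟩ := hdenom q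
  obtain ⟨u, hu⟩ := hunit s hs
  have hq' : q = ↑u⁻¹ * ψ r := by rw [← hq, ← hu, Units.inv_mul_cancel_left]
  rw [hq', ← mul_assoc]
  refine hright _ (Ideal.mul_unit_inv_mem hLA _ u (fun y hy ↦ ?_) hx) r
  rw [hu]
  exact hright y hy s
end

section
/- Let R be a ring with a left Artinian left quotient ring Q = C⁻¹R, let r be the (Jacobson = prime) radical of Q with nilpotency degree ν_Q, let Max(Q) = {m₁, …, m_s} be the set of maximal ideals of Q, and set p_i = R ∩ m_i. Then: (1) the set of minimal prime ideals of R is Min(R) = {p₁, …, p_s}, and the prime radical of R is n = p₁ ∩ ⋯ ∩ p_s; (2) n = R ∩ r, C⁻¹n = r, and n is a nilpotent ideal of R of nilpotency degree ν = ν_Q. -/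
open Function

universe u v

/-- A maximal (two-sided) ideal of a ring. -/
def IsMaximalTwoSidedNC {Q : Type*} [Ring Q] (P : Ideal Q) : Prop :=
  P.IsTwoSidedNC ∧ P ≠ ⊤ ∧ ∀ J : Ideal Q, J.IsTwoSidedNC → P < J → J = ⊤

/-- A minimal prime (two-sided) ideal of a ring. -/
def IsMinimalPrimeNC {R : Type*} [Ring R] (P : Ideal R) : Prop :=
  P.IsPrimeNC ∧ ∀ P' : Ideal R, P'.IsPrimeNC → P' ≤ P → P' = P

namespace Ideal

variable {R : Type*} [Ring R]

theorem IsPrimeNC.le_or_le_of_mul_le {P A B : Ideal R} (hP : P.IsPrimeNC) (h : A * B ≤ P) :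
    A ≤ P ∨ B ≤ P := by
  by_contra! hn
  obtain ⟨a, ha, haP⟩ := SetLike.not_le_iff_exists.mp hn.1
  obtain ⟨b, hb, hbP⟩ := SetLike.not_le_iff_exists.mp hn.2
  refine (hP.2.2 a b fun r => ?_).elim haP hbP
  rw [mul_assoc]
  exact h (mul_mem_mul ha (B.mul_mem_left r hb))

theorem IsPrimeNC.le_of_pow_le {P I : Ideal R} (hP : P.IsPrimeNC) {k : ℕ} (h : I ^ k ≤ P) :
    I ≤ P := by
  induction k with
  | zero =>
    rw [Submodule.pow_zero, one_eq_top] at h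
    exact absurd (top_le_iff.mp h) hP.1
  | succ k ih =>
    rw [Submodule.pow_succ] at h
    exact (hP.le_or_le_of_mul_le h).elim ih id

theorem IsPrimeNC.exists_le_of_finset_inf_le {ι : Type*} {P : Ideal R} (hP : P.IsPrimeNC)
    {t : Finset ι} {f : ι → Ideal R} (hf : ∀ i, (f i).IsTwoSidedNC) (h : t.inf f ≤ P) :
    ∃ i ∈ t, f i ≤ P := by
  classical
  induction t using Finset.induction_on with
  | empty => exact absurd (top_le_iff.mp (by simpa using h)) hP.1
  | insert i t _ ih =>
    rw [Finset.inf_insert] at h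
    have hmul : f i * t.inf f ≤ P :=
      le_trans (mul_le.mpr fun a ha b hb =>
        Submodule.mem_inf.mpr ⟨hf i a ha b, Submodule.smul_mem _ a hb⟩) h
    rcases hP.le_or_le_of_mul_le hmul with h' | h'
    · exact ⟨i, Finset.mem_insert_self i t, h'⟩
    · obtain ⟨j, hj, hjP⟩ := ih h'
      exact ⟨j, Finset.mem_insert_of_mem hj, hjP⟩

theorem pow_comap_le_comap_pow {S : Type*} [Ring S] (φ : R →+* S) (I : Ideal S) (k : ℕ) :
    (I.comap φ) ^ k ≤ (I ^ k).comap φ := by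
  induction k with
  | zero => simp only [Submodule.pow_zero, one_eq_top, comap_top, le_refl]
  | succ k ih =>
    rw [Submodule.pow_succ, Submodule.pow_succ]
    refine mul_le.mpr fun a ha b hb => ?_
    rw [mem_comap, map_mul]
    exact mul_mem_mul (ih ha) hb

end Ideal

theorem IsMaximalTwoSidedNC.isPrimeNC {Q : Type*} [Ring Q] {M : Ideal Q}
    (hM : IsMaximalTwoSidedNC M) : M.IsPrimeNC := by
  obtain ⟨h2, hne, hmax⟩ := hM
  refine ⟨hne, h2, fun a b hab => or_iff_not_imp_left.mpr fun ha => ?_⟩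
  let A : Ideal Q := Ideal.span (Set.range fun y => a * y)
  have hA : A.IsTwoSidedNC := by
    intro x hx r
    induction hx using Submodule.span_induction with
    | mem x hx =>
      obtain ⟨y, rfl⟩ := hx
      exact Ideal.subset_span ⟨y * r, (mul_assoc a y r).symm⟩
    | zero => simp
    | add x y _ _ hx hy => rw [add_mul]; exact add_mem hx hy
    | smul q x _ hx => rw [smul_eq_mul, mul_assoc]; exact A.mul_mem_left q hx
  have haA : a ∈ A := Ideal.subset_span ⟨1, mul_one a⟩
  have htop : M ⊔ A = ⊤ := by
    refine hmax _ (fun x hx r => ?_) (lt_of_le_of_ne le_sup_left fun h => ha ?_)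
    · obtain ⟨y, hy, z, hz, rfl⟩ := Submodule.mem_sup.mp hx
      rw [add_mul]
      exact Submodule.add_mem_sup (h2 y hy r) (hA z hz r)
    · rw [h]; exact (le_sup_right : A ≤ M ⊔ A) haA
  have hAb : ∀ x ∈ A, x * b ∈ M := by
    intro x hx
    induction hx using Submodule.span_induction with
    | mem x hx => obtain ⟨y, rfl⟩ := hx; exact hab y
    | zero => simp
    | add x y _ _ hx hy => rw [add_mul]; exact add_mem hx hy
    | smul q x _ hx => rw [smul_eq_mul, mul_assoc]; exact M.mul_mem_left q hx
  obtain ⟨y, hy, z, hz, hyz⟩ :=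
    Submodule.mem_sup.mp (htop ▸ Submodule.mem_top : (1 : Q) ∈ M ⊔ A)
  rw [← one_mul b, ← hyz, add_mul]
  exact add_mem (h2 y hy b) (hAb z hz)

section Artinian

variable {Q : Type*} [Ring Q]

/-- The largest two-sided ideal contained in a maximal left ideal is prime. -/
theorem Ideal.IsMaximal.exists_isPrimeNC_le {L : Ideal Q} (hL : L.IsMaximal) :
    ∃ P : Ideal Q, P.IsPrimeNC ∧ P ≤ L := by
  let P : Ideal Q :=
    { carrier := {x | ∀ y, x * y ∈ L}
      add_mem' := fun {x z} hx hz y => by rw [add_mul]; exact add_mem (hx y) (hz y)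
      zero_mem' := fun y => by simp
      smul_mem' := fun q x hx y => by
        rw [smul_eq_mul, mul_assoc]; exact L.mul_mem_left q (hx y) }
  have hPL : P ≤ L := fun x hx => mul_one x ▸ hx 1
  refine ⟨P, ⟨fun h => hL.ne_top (top_le_iff.mp (h ▸ hPL)), fun a ha r y => ?_, fun a b hab => ?_⟩,
    hPL⟩
  · rw [mul_assoc]; exact ha (r * y)
  · refine or_iff_not_imp_right.mpr fun hb => ?_
    obtain ⟨y, hy⟩ : ∃ y, b * y ∉ L := not_forall.mp hb
    obtain ⟨t, l, hl, htl⟩ := hL.exists_inv hy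
    intro w
    have h1 : a * w = a * (w * t) * b * y + a * w * l := by
      conv_lhs => rw [← mul_one w, ← htl]
      noncomm_ring
    rw [h1]
    exact add_mem (hab (w * t) y) (L.mul_mem_left _ hl)

theorem primeRadical_le_jacobson : primeRadical Q ≤ Ring.jacobson Q := by
  rw [← Ideal.jacobson_bot]
  refine le_sInf fun L hL => ?_
  obtain ⟨P, hP, hPL⟩ := hL.2.exists_isPrimeNC_le
  exact le_trans (sInf_le (show P ∈ {P : Ideal Q | P.IsPrimeNC} from hP)) hPL

theorem primeRadical_isTwoSidedNC : (primeRadical Q).IsTwoSidedNC := fun a ha r =>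
  Submodule.mem_sInf.mpr fun P hP => hP.2.1 a (Submodule.mem_sInf.mp ha P hP) r

variable [IsArtinianRing Q]

theorem exists_pow_jacobson_eq_bot : ∃ k : ℕ, Ring.jacobson Q ^ k = ⊥ :=
  IsSemiprimaryRing.isNilpotent

theorem Ideal.IsPrimeNC.jacobson_le {P : Ideal Q} (hP : P.IsPrimeNC) : Ring.jacobson Q ≤ P := by
  obtain ⟨k, hk⟩ := exists_pow_jacobson_eq_bot (Q := Q)
  exact hP.le_of_pow_le (hk.trans_le bot_le)

theorem exists_pow_primeRadical_eq_bot : ∃ k : ℕ, primeRadical Q ^ k = ⊥ := by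
  obtain ⟨k, hk⟩ := exists_pow_jacobson_eq_bot (Q := Q)
  exact ⟨k, le_bot_iff.mp (hk ▸ Ideal.pow_right_mono primeRadical_le_jacobson k)⟩

theorem exists_sup_eq_top_and_inf_le_jacobson (I : Ideal Q) :
    ∃ K : Ideal Q, I ⊔ K = ⊤ ∧ I ⊓ K ≤ Ring.jacobson Q := by
  let π := Ideal.Quotient.mk (Ring.jacobson Q)
  have hπ : Function.Surjective π := Ideal.Quotient.mk_surjective
  obtain ⟨K, hK⟩ := exists_isCompl (I.map π)
  refine ⟨K.comap π, ?_, fun x hx => ?_⟩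
  · rw [eq_top_iff]
    intro x _
    obtain ⟨y, hy, z, hz, hyz⟩ :=
      Submodule.mem_sup.mp (hK.sup_eq_top ▸ Submodule.mem_top : π x ∈ I.map π ⊔ K)
    obtain ⟨w, hw, rfl⟩ := (Ideal.mem_map_iff_of_surjective π hπ).mp hy
    rw [← add_sub_cancel w x]
    refine Submodule.add_mem_sup hw ?_
    rwa [Ideal.mem_comap, map_sub, ← hyz, add_sub_cancel_left]
  · have h0 : π x ∈ I.map π ⊓ K := ⟨Ideal.mem_map_of_mem π hx.1, hx.2⟩
    rw [hK.inf_eq_bot, Submodule.mem_bot] at h0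
    exact Ideal.Quotient.eq_zero_iff_mem.mp h0

theorem Ideal.IsPrimeNC.isMaximalTwoSidedNC {P : Ideal Q} (hP : P.IsPrimeNC) :
    IsMaximalTwoSidedNC P := by
  refine ⟨hP.2.1, hP.1, fun I hI hPI => ?_⟩
  obtain ⟨K, hsup, hinf⟩ := exists_sup_eq_top_and_inf_le_jacobson I
  have hmul : I * K ≤ P :=
    le_trans (Ideal.mul_le.mpr fun a ha b hb =>
      Submodule.mem_inf.mpr ⟨hI a ha b, K.mul_mem_left a hb⟩)
      (hinf.trans hP.jacobson_le)
  rcases hP.le_or_le_of_mul_le hmul with h | h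
  · exact absurd h hPI.not_ge
  · rw [← hsup, sup_eq_left.mpr (h.trans hPI.le)]

theorem isPrimeNC_iff_isMaximalTwoSidedNC {P : Ideal Q} :
    P.IsPrimeNC ↔ IsMaximalTwoSidedNC P :=
  ⟨Ideal.IsPrimeNC.isMaximalTwoSidedNC, IsMaximalTwoSidedNC.isPrimeNC⟩

end Artinian

section LeftQuotRing

variable {R : Type u} [Ring R] {Q : Type v} [Ring Q] {φ : R →+* Q}

theorem IsLeftQuotRing.coe_eq_locSet_comap (hφ : IsLeftQuotRing φ) (I : Ideal Q) :
    (I : Set Q) = locSet φ (I.comap φ) := by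
  ext q
  constructor
  · intro hq
    obtain ⟨c, a, hc, hca⟩ := hφ.denom q
    exact ⟨c, a, hc, Ideal.mem_comap.mpr (hca ▸ I.mul_mem_left _ hq), hca⟩
  · rintro ⟨c, a, hc, ha, hca⟩
    refine (Ideal.unit_mul_mem_iff_mem I (hφ.isUnit c hc)).mp ?_
    rw [hca]
    exact ha

theorem IsLeftQuotRing.comap_le_comap_iff (hφ : IsLeftQuotRing φ) {I J : Ideal Q} :
    I.comap φ ≤ J.comap φ ↔ I ≤ J := by
  refine ⟨fun h => ?_, fun h => Ideal.comap_mono h⟩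
  rw [← SetLike.coe_subset_coe, hφ.coe_eq_locSet_comap I, hφ.coe_eq_locSet_comap J]
  rintro q ⟨c, a, hc, ha, hca⟩
  exact ⟨c, a, hc, h ha, hca⟩

theorem IsLeftQuotRing.isTwoSidedNC_of_mul_map_mem [IsArtinianRing Q] (hφ : IsLeftQuotRing φ)
    {A : Ideal Q} (hA : ∀ x ∈ A, ∀ r : R, x * φ r ∈ A) : A.IsTwoSidedNC := by
  intro x hx q
  obtain ⟨c, r, hc, hcr⟩ := hφ.denom q
  have hu := hφ.isUnit c hc
  let f : A →ₗ[Q] A := (LinearMap.toSpanSingleton Q Q (φ c)).restrict fun y hy => hA y hy c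
  have hf : Function.Injective f := fun y z hyz =>
    Subtype.ext (hu.mul_left_injective (congrArg Subtype.val hyz))
  obtain ⟨y, hy⟩ := IsArtinian.surjective_of_injective_endomorphism f hf ⟨x, hx⟩
  have hyx : (y : Q) * φ c = x := congrArg Subtype.val hy
  rw [← hyx, mul_assoc, hcr]
  exact hA y y.2 r

theorem IsLeftQuotRing.isPrimeNC_comap [IsArtinianRing Q] (hφ : IsLeftQuotRing φ)
    {P : Ideal Q} (hP : P.IsPrimeNC) : (P.comap φ).IsPrimeNC := by
  refine ⟨Ideal.comap_ne_top φ hP.1, fun a ha r => ?_, fun a b hab => ?_⟩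
  · rw [Ideal.mem_comap, map_mul]
    exact hP.2.1 _ ha _
  · let A : Ideal Q :=
      { carrier := {x | ∀ t : R, x * φ t * φ b ∈ P}
        add_mem' := fun {x z} hx hz t => by
          rw [add_mul, add_mul]; exact add_mem (hx t) (hz t)
        zero_mem' := fun t => by simp
        smul_mem' := fun q x hx t => by
          rw [smul_eq_mul, mul_assoc, mul_assoc, ← mul_assoc x]
          exact P.mul_mem_left q (hx t) }
    have hA : A.IsTwoSidedNC := hφ.isTwoSidedNC_of_mul_map_mem fun x hx r t => by
      rw [mul_assoc x, ← map_mul]; exact hx (r * t)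
    have ha : φ a ∈ A := fun t => by
      rw [← map_mul, ← map_mul]; exact hab t
    refine hP.2.2 (φ a) (φ b) fun q => ?_
    simpa using hA _ ha q 1

theorem IsLeftQuotRing.pow_le_map_pow_comap (hφ : IsLeftQuotRing φ) {I : Ideal Q}
    (hI : I.IsTwoSidedNC) (k : ℕ) : I ^ k ≤ ((I.comap φ) ^ k).map φ := by
  have : I.IsTwoSided := ⟨fun b ha => hI _ ha b⟩
  induction k with
  | zero => simp only [Submodule.pow_zero, Ideal.one_eq_top, Ideal.map_top, le_refl]
  | succ k ih =>
    rw [Ideal.IsTwoSided.pow_succ, Ideal.IsTwoSided.pow_succ]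
    refine Ideal.mul_le.mpr fun x hx y hy => ?_
    replace hy := ih hy
    induction hy using Submodule.span_induction generalizing x with
    | mem y hy =>
      obtain ⟨z, hz, rfl⟩ := hy
      obtain ⟨c, a, hc, hca⟩ := hφ.denom x
      refine (Ideal.unit_mul_mem_iff_mem _ (hφ.isUnit c hc)).mp ?_
      rw [← mul_assoc, hca, ← map_mul]
      refine Ideal.mem_map_of_mem φ (Ideal.mul_mem_mul (Ideal.mem_comap.mpr ?_) hz)
      exact hca ▸ I.mul_mem_left _ hx
    | zero => simp
    | add y z _ _ hy hz => rw [mul_add]; exact add_mem (hy x hx) (hz x hx)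
    | smul q y _ hy => rw [smul_eq_mul, ← mul_assoc]; exact hy _ (hI x hx q)

theorem IsLeftQuotRing.pow_comap_eq_bot_iff (hφ : IsLeftQuotRing φ) {I : Ideal Q}
    (hI : I.IsTwoSidedNC) (k : ℕ) : (I.comap φ) ^ k = ⊥ ↔ I ^ k = ⊥ := by
  constructor
  · intro h
    simpa [h] using hφ.pow_le_map_pow_comap hI k
  · intro h
    rw [eq_bot_iff]
    intro x hx
    have hx' := Ideal.pow_comap_le_comap_pow φ I k hx
    rw [h, Ideal.mem_comap, Submodule.mem_bot] at hx'
    exact (map_eq_zero_iff φ hφ.inj).mp hx'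

end LeftQuotRing

/-- **Proposition (`b13Sep12`.(2),(3)).** Let `R` be a ring with a left Artinian left
quotient ring `Q = C⁻¹R` (realized by `φ : R → Q`), let `r = primeRadical Q` be the
(Jacobson = prime) radical of `Q`, let `Max(Q) = {m₁, …, m_s}` be the (finitely many)
maximal (two-sided) ideals of `Q` and put `p_i = R ∩ m_i`.  Then:
(1) `Min(R) = {p₁, …, p_s}` is the set of minimal primes of `R`, and the prime radical of
`R` is `n = p₁ ∩ ⋯ ∩ p_s`;
(2) `n = R ∩ r`, `C⁻¹n = r`, and `n` is a nilpotent ideal of `R` whose nilpotency degree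
equals that of `r` (encoded: `n^k = ⊥ ↔ r^k = ⊥` for all `k`). -/
theorem minimal_primes_and_prime_radical_of_order
    {R : Type u} [Ring R] {Q : Type v} [Ring Q] (φ : R →+* Q)
    (hquot : IsLeftQuotRing φ) (hart : IsArtinianRing Q)
    (s : ℕ) (m : Fin s → Ideal Q) (hminj : Function.Injective m)
    (hmax : {P : Ideal Q | IsMaximalTwoSidedNC P} = Set.range m) :
    ({P : Ideal R | IsMinimalPrimeNC P} = Set.range fun i => (m i).comap φ) ∧
    (primeRadical R = ⨅ i : Fin s, (m i).comap φ) ∧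
    (primeRadical R = (primeRadical Q).comap φ) ∧
    ((↑(primeRadical Q) : Set Q) = locSet φ (primeRadical R)) ∧
    IsNilpotentIdeal (primeRadical R) ∧
    (∀ k : ℕ, primeRadical R ^ k = ⊥ ↔ primeRadical Q ^ k = ⊥) := by
  have hprime (P : Ideal Q) : P.IsPrimeNC ↔ ∃ i, m i = P := by
    rw [isPrimeNC_iff_isMaximalTwoSidedNC]
    exact Set.ext_iff.mp hmax P
  have hm (i : Fin s) : (m i).IsPrimeNC := (hprime _).mpr ⟨i, rfl⟩
  have hp (i : Fin s) : ((m i).comap φ).IsPrimeNC := hquot.isPrimeNC_comap (hm i)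
  have hradQ : primeRadical Q = ⨅ i, m i := by
    rw [← sInf_range]
    exact congrArg sInf (Set.ext hprime)
  have hcomap : (primeRadical Q).comap φ = ⨅ i, (m i).comap φ := by
    rw [hradQ, Ideal.comap_iInf]
  have hpow := hquot.pow_comap_eq_bot_iff (primeRadical_isTwoSidedNC (Q := Q))
  obtain ⟨k, hk⟩ := exists_pow_primeRadical_eq_bot (Q := Q)
  have hle {P : Ideal R} (hP : P.IsPrimeNC) : (primeRadical Q).comap φ ≤ P :=
    hP.le_of_pow_le (((hpow k).mpr hk).trans_le bot_le)
  have hradR : primeRadical R = (primeRadical Q).comap φ :=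
    le_antisymm (hcomap ▸ le_iInf fun i => sInf_le (hp i)) (le_sInf fun P hP => hle hP)
  have hexists {P : Ideal R} (hP : P.IsPrimeNC) : ∃ i, (m i).comap φ ≤ P := by
    have h := hle hP
    rw [hcomap, ← Finset.inf_univ_eq_iInf] at h
    obtain ⟨i, -, hi⟩ := hP.exists_le_of_finset_inf_le (fun i => (hp i).2.1) h
    exact ⟨i, hi⟩
  refine ⟨?_, hradR.trans hcomap, hradR, ?_, ⟨k, ?_⟩, fun k => ?_⟩
  · ext P
    constructor
    · rintro ⟨hP, hmin⟩
      obtain ⟨i, hi⟩ := hexists hP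
      exact ⟨i, hmin _ (hp i) hi⟩
    · rintro ⟨i, rfl⟩
      refine ⟨hp i, fun P' hP' hP'i => le_antisymm hP'i ?_⟩
      obtain ⟨j, hj⟩ := hexists hP'
      have hji : m j ≤ m i := hquot.comap_le_comap_iff.mp (hj.trans hP'i)
      have hij : m j = m i := eq_of_le_of_not_lt hji fun hlt =>
        (hm i).1 ((hm j).isMaximalTwoSidedNC.2.2 _ (hm i).2.1 hlt)
      exact (Ideal.comap_mono hij.ge).trans hj
  · rw [hradR]
    exact hquot.coe_eq_locSet_comap _
  · rw [hradR, Submodule.pow_succ, (hpow k).mpr hk, Ideal.bot_mul]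
  · rw [hradR]
    exact hpow k
end
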